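/- Fix positive integers M, N, a real T > 0, set Δf = 1/T, and let g be the rectangular pulse g(t) = 1/√T for 0 ≤ t < T and 0 otherwise; let x(t) be the OTFS transmit signal with delay-Doppler symbols x[k,l]. Let L ≥ 1 be an integer and suppose the noise-free received signal is y(t) = Σ_{i=1}^{L} h_i·x(t − τ_i)·e^{2πi ν_i (t − τ_i)} with h_i ∈ ℂ, 0 < τ_i < T, ν_i ∈ ℝ. Then for all 0 ≤ k' ≤ N−1, 0 ≤ l' ≤ M−1 the sampled Zak transform of y satisfies Z_y(l'T/M, k'Δf/N) = Σ_{k=0}^{N−1} Σ_{l=0}^{M−1} x[k,l]·h̃[k',l',k,l], where h̃[k',l',k,l] := Σ_{i=1}^{L} h_i[k',l']·w₁((k'−k)Δf/N − ν_i)·w₂((l'−l)T/M − τ_i), h_i[k',l'] := h_i·e^{2πi (ν_i/Δf)(l'/M − τ_i/T)}·e^{2πi (k'/N − ν_i/Δf)·⌊l'/M − τ_i/T⌋}, w₁(ν) := (1/N) Σ_{n=0}^{N−1} e^{−2πi n ν T}, and w₂(τ) := (1/M) Σ_{m=0}^{M−1} e^{2πi m Δf τ}. -/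

import Mathlib

open Complex Real Finset

/-- The Zak transform of `f : ℝ → ℂ` with period `T`:
`Z_f(τ, ν) := √T · Σ_{k ∈ ℤ} f(τ + kT)·e^{−2πi k ν T}`. -/
noncomputable def zak (T : ℝ) (f : ℝ → ℂ) (τ ν : ℝ) : ℂ :=
  (Real.sqrt T : ℂ) * ∑' k : ℤ, f (τ + k * T) * Complex.exp (-2 * π * I * k * ν * T)

/-- The basic Doppler-domain pulse `w₁(ν) := (1/N) Σ_{n=0}^{N−1} e^{−2πi n ν T}`. -/
noncomputable def w1 (N : ℕ) (T : ℝ) (ν : ℝ) : ℂ :=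
  (1 / N : ℂ) * ∑ n ∈ range N, Complex.exp (-2 * π * I * n * ν * T)

/-- The basic delay-domain pulse `w₂(τ) := (1/M) Σ_{m=0}^{M−1} e^{2πi m Δf τ}` with
`Δf = 1/T`. -/
noncomputable def w2 (M : ℕ) (T : ℝ) (τ : ℝ) : ℂ :=
  (1 / M : ℂ) * ∑ m ∈ range M, Complex.exp (2 * π * I * m * (1 / T) * τ)

/-! A time-frequency shift of a signal shifts its Zak transform in both variables, up to a phase,
and both the OTFS modulator and the multipath channel are superpositions of such shifts. The
modulator only shifts by points of the lattice `Tℤ × T⁻¹ℤ`, under which a Zak transform is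
quasi-periodic; hence the transform of the transmitted signal is that of the pulse times a
trigonometric polynomial, which the definition of `X` turns into a combination of `w1` and `w2`.
For the rectangular pulse exactly one sample `g (τ + k * T)` is nonzero, the one with
`k = -⌊τ / T⌋`, so that its Zak transform is a pure phase. -/

/-- The time-frequency shift of `f` by the delay `a` and the Doppler frequency `b`; the carrier
is delayed together with the signal. -/
noncomputable def tfShift (a b : ℝ) (f : ℝ → ℂ) (t : ℝ) : ℂ :=
  f (t - a) * Complex.exp (2 * π * I * (b * (t - a)))

/-- The superposition of the time-frequency shifts of `f` by `(a i, b i)` with gains `c i`.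
It describes a multipath channel as well as a Gabor-type modulator with pulse `f`. -/
noncomputable def tfSuperposition {ι : Type*} (s : Finset ι) (c : ι → ℂ) (a b : ι → ℝ)
    (f : ℝ → ℂ) (t : ℝ) : ℂ :=
  ∑ i ∈ s, c i * tfShift (a i) (b i) f t

/-- The inverse symplectic finite Fourier transform, from delay-Doppler symbols `x k l` to
time-frequency symbols indexed by time `n` and frequency `m`. -/
noncomputable def isfft (M N : ℕ) (x : ℕ → ℕ → ℂ) (n m : ℕ) : ℂ :=
  (1 / (M * N) : ℂ) * ∑ k ∈ range N, ∑ l ∈ range M,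
    x k l * Complex.exp (-2 * π * I * ((m * l : ℝ) / M - (n * k : ℝ) / N))

/-- The OTFS signal with pulse `g` carrying the delay-Doppler symbols `x`. An index `p` is a pair
(frequency, time). -/
noncomputable def otfsSignal (M N : ℕ) (T : ℝ) (g : ℝ → ℂ) (x : ℕ → ℕ → ℂ) : ℝ → ℂ :=
  tfSuperposition (range M ×ˢ range N) (fun p => isfft M N x p.2 p.1)
    (fun p => p.2 * T) (fun p => p.1 / T) g

/-- The rectangular pulse of unit energy on `[0, T)`. -/
noncomputable def rectPulse (T : ℝ) : ℝ → ℂ :=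
  (Set.Ico 0 T).indicator fun _ => 1 / (Real.sqrt T : ℂ)

/-- Absolute convergence of the series defining `zak T f τ ν`, at every `τ`; it does not depend
on `ν` because the exponential factors are unimodular. -/
def ZakSummable (T : ℝ) (f : ℝ → ℂ) : Prop :=
  ∀ τ : ℝ, Summable fun k : ℤ => f (τ + k * T)

section Zak

variable {ι : Type*} {T : ℝ} {f : ℝ → ℂ}

theorem ZakSummable.summable_mul_exp (hf : ZakSummable T f) (τ ν : ℝ) :
    Summable fun k : ℤ => f (τ + k * T) * Complex.exp (-2 * π * I * k * ν * T) := by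
  refine (hf τ).norm.of_norm_bounded fun k => ?_
  have hphase : -2 * π * I * k * ν * T = ((-2 * π * k * ν * T : ℝ) : ℂ) * I := by
    push_cast; ring
  rw [norm_mul, hphase, Complex.norm_exp_ofReal_mul_I, mul_one]

theorem ZakSummable.tfShift (hf : ZakSummable T f) (a b : ℝ) :
    ZakSummable T (tfShift a b f) := by
  intro τ
  refine ((hf.summable_mul_exp (τ - a) (-b)).mul_left
    (Complex.exp (2 * π * I * (b * (τ - a))))).congr fun k => ?_
  rw [_root_.tfShift, mul_left_comm, ← Complex.exp_add]
  congr 2 <;> push_cast <;> ring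

theorem ZakSummable.tfSuperposition (hf : ZakSummable T f) (s : Finset ι) (c : ι → ℂ)
    (a b : ι → ℝ) : ZakSummable T (tfSuperposition s c a b f) := fun τ =>
  summable_sum fun i _ => (hf.tfShift (a i) (b i) τ).mul_left (c i)

theorem zak_tfShift (T a b τ ν : ℝ) (f : ℝ → ℂ) :
    zak T (tfShift a b f) τ ν =
      Complex.exp (2 * π * I * (b * (τ - a))) * zak T f (τ - a) (ν - b) := by
  have hphase (k : ℤ) :
      Complex.exp (2 * π * I * (b * ((τ + k * T : ℝ) - a))) *
          Complex.exp (-2 * π * I * k * ν * T) =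
        Complex.exp (2 * π * I * (b * (τ - a))) *
          Complex.exp (-2 * π * I * k * (ν - b : ℝ) * T) := by
    simp only [← Complex.exp_add]
    congr 1
    push_cast
    ring
  simp only [zak, tfShift, mul_assoc (f _), hphase, ← tsum_mul_left]
  refine tsum_congr fun k => ?_
  rw [add_sub_right_comm]
  ring

theorem zak_tfSuperposition (hf : ZakSummable T f) (s : Finset ι) (c : ι → ℂ) (a b : ι → ℝ)
    (τ ν : ℝ) :
    zak T (tfSuperposition s c a b f) τ ν =
      ∑ i ∈ s, c i * zak T (tfShift (a i) (b i) f) τ ν := by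
  simp only [zak, tfSuperposition, sum_mul, mul_assoc (c _)]
  rw [Summable.tsum_finsetSum fun i _ =>
    ((hf.tfShift (a i) (b i)).summable_mul_exp τ ν).mul_left (c i)]
  simp only [tsum_mul_left, mul_sum, mul_left_comm]

theorem zak_sub_int_mul (T τ ν : ℝ) (f : ℝ → ℂ) (n : ℤ) :
    zak T f (τ - n * T) ν = Complex.exp (-2 * π * I * n * ν * T) * zak T f τ ν := by
  have hphase (k : ℤ) :
      Complex.exp (-2 * π * I * (k + n : ℤ) * ν * T) =
        Complex.exp (-2 * π * I * n * ν * T) * Complex.exp (-2 * π * I * k * ν * T) := by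
    rw [← Complex.exp_add]
    congr 1
    push_cast
    ring
  rw [zak, ← (Equiv.addRight n).tsum_eq]
  simp only [zak, Equiv.coe_addRight, hphase, ← tsum_mul_left]
  refine tsum_congr fun k => ?_
  rw [show τ - n * T + (k + n : ℤ) * T = τ + k * T by push_cast; ring]
  ring

theorem zak_sub_int_div (hT : T ≠ 0) (f : ℝ → ℂ) (τ ν : ℝ) (m : ℤ) :
    zak T f τ (ν - m / T) = zak T f τ ν := by
  have hT' : (T : ℂ) ≠ 0 := mod_cast hT
  rw [zak, zak]
  congr 2 with k
  congr 1
  rw [Complex.exp_eq_exp_iff_exists_int]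
  refine ⟨k * m, ?_⟩
  push_cast
  field_simp
  ring

theorem zak_tfShift_lattice (hT : T ≠ 0) (f : ℝ → ℂ) (τ ν : ℝ) (m n : ℤ) :
    zak T (tfShift (n * T) (m / T) f) τ ν = zak T f τ ν *
      (Complex.exp (2 * π * I * m * (1 / T) * τ) * Complex.exp (-2 * π * I * n * ν * T)) := by
  have hT' : (T : ℂ) ≠ 0 := mod_cast hT
  have hphase : Complex.exp (2 * π * I * ((m / T : ℝ) * (τ - (n * T : ℝ)))) =
      Complex.exp (2 * π * I * m * (1 / T) * τ) := by
    rw [Complex.exp_eq_exp_iff_exists_int]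
    refine ⟨-(m * n), ?_⟩
    push_cast
    field_simp
    ring
  rw [zak_tfShift, zak_sub_int_div hT, zak_sub_int_mul, hphase]
  ring

end Zak

section Otfs

variable {ι : Type*} {T : ℝ} {g : ℝ → ℂ}

theorem sum_isfft_mul_exp (hT : T ≠ 0) (M N : ℕ) (x : ℕ → ℕ → ℂ) (τ ν : ℝ) :
    ∑ m ∈ range M, ∑ n ∈ range N, isfft M N x n m *
      (Complex.exp (2 * π * I * m * (1 / T) * τ) * Complex.exp (-2 * π * I * n * ν * T)) =
    ∑ k ∈ range N, ∑ l ∈ range M, x k l *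
      (w1 N T (ν - k / (N * T)) * w2 M T (τ - l * T / M)) := by
  have hT' : (T : ℂ) ≠ 0 := mod_cast hT
  have hphase (k l m n : ℕ) :
      Complex.exp (-2 * π * I * ((m * l : ℝ) / M - (n * k : ℝ) / N)) *
          (Complex.exp (2 * π * I * m * (1 / T) * τ) * Complex.exp (-2 * π * I * n * ν * T)) =
        Complex.exp (-2 * π * I * n * (ν - k / (N * T) : ℝ) * T) *
          Complex.exp (2 * π * I * m * (1 / T) * (τ - l * T / M : ℝ)) := by
    simp only [← Complex.exp_add]
    congr 1
    push_cast
    field_simp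
    ring
  simp only [isfft, mul_sum, sum_mul]
  rw [← sum_product', sum_comm]
  refine sum_congr rfl fun k _ => ?_
  rw [sum_comm]
  refine sum_congr rfl fun l _ => ?_
  rw [sum_product_right, w1, w2, mul_mul_mul_comm, sum_mul_sum]
  simp only [← hphase, mul_sum]
  exact sum_congr rfl fun n _ => sum_congr rfl fun m _ => by ring

theorem otfsSignal_apply (M N : ℕ) (T : ℝ) (g : ℝ → ℂ) (x : ℕ → ℕ → ℂ) (t : ℝ) :
    otfsSignal M N T g x t = ∑ m ∈ range M, ∑ n ∈ range N, isfft M N x n m * g (t - n * T) *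
      Complex.exp (2 * π * I * ((m : ℝ) * (1 / T : ℝ) * (t - n * T))) := by
  simp only [otfsSignal, tfSuperposition, tfShift, sum_product]
  push_cast
  simp only [mul_assoc, div_eq_mul_inv, one_mul]

theorem ZakSummable.otfsSignal (hg : ZakSummable T g) (M N : ℕ) (x : ℕ → ℕ → ℂ) :
    ZakSummable T (otfsSignal M N T g x) :=
  hg.tfSuperposition _ _ _ _

theorem zak_otfsSignal (hT : T ≠ 0) (hg : ZakSummable T g) (M N : ℕ) (x : ℕ → ℕ → ℂ)
    (τ ν : ℝ) :
    zak T (otfsSignal M N T g x) τ ν = zak T g τ ν *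
      ∑ k ∈ range N, ∑ l ∈ range M, x k l *
        (w1 N T (ν - k / (N * T)) * w2 M T (τ - l * T / M)) := by
  have hlattice (m n : ℕ) : zak T (tfShift (n * T) (m / T) g) τ ν = zak T g τ ν *
      (Complex.exp (2 * π * I * m * (1 / T) * τ) * Complex.exp (-2 * π * I * n * ν * T)) :=
    mod_cast zak_tfShift_lattice hT g τ ν m n
  simp only [otfsSignal, zak_tfSuperposition hg, sum_product, hlattice,
    mul_left_comm _ (zak T g τ ν), ← mul_sum, sum_isfft_mul_exp hT]

theorem zak_tfSuperposition_otfsSignal (hT : T ≠ 0) (hg : ZakSummable T g) (M N : ℕ)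
    (x : ℕ → ℕ → ℂ) (s : Finset ι) (h : ι → ℂ) (τd νd : ι → ℝ) (τ ν : ℝ) :
    zak T (tfSuperposition s h τd νd (otfsSignal M N T g x)) τ ν =
      ∑ k ∈ range N, ∑ l ∈ range M, x k l * ∑ i ∈ s,
        h i * Complex.exp (2 * π * I * (νd i * (τ - τd i))) *
          zak T g (τ - τd i) (ν - νd i) *
          w1 N T (ν - νd i - k / (N * T)) * w2 M T (τ - τd i - l * T / M) := by
  rw [zak_tfSuperposition (hg.otfsSignal M N x)]
  simp only [zak_tfShift, zak_otfsSignal hT hg, mul_sum]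
  rw [sum_comm]
  refine sum_congr rfl fun k _ => ?_
  rw [sum_comm]
  exact sum_congr rfl fun l _ => sum_congr rfl fun i _ => by ring

end Otfs

section RectPulse

variable {T : ℝ}

theorem add_int_mul_mem_Ico_iff (hT : 0 < T) (τ : ℝ) (k : ℤ) :
    τ + k * T ∈ Set.Ico 0 T ↔ k = -⌊τ / T⌋ := by
  rw [eq_neg_iff_add_eq_zero, ← Int.floor_intCast_add, Int.floor_eq_zero_iff]
  simp only [Set.mem_Ico]
  rw [show τ + k * T = (k + τ / T) * T by field_simp; ring,
    mul_nonneg_iff_of_pos_right hT, mul_lt_iff_lt_one_left hT]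

theorem rectPulse_add_int_mul (hT : 0 < T) (τ : ℝ) (k : ℤ) :
    rectPulse T (τ + k * T) = if k = -⌊τ / T⌋ then 1 / (Real.sqrt T : ℂ) else 0 := by
  simp only [rectPulse, Set.indicator_apply, add_int_mul_mem_Ico_iff hT]

theorem zakSummable_rectPulse (hT : 0 < T) : ZakSummable T (rectPulse T) := by
  intro τ
  simp only [rectPulse_add_int_mul hT]
  exact (hasSum_ite_eq _ _).summable

theorem zak_rectPulse (hT : 0 < T) (τ ν : ℝ) :
    zak T (rectPulse T) τ ν = Complex.exp (2 * π * I * (ν * T * ⌊τ / T⌋)) := by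
  have hs : (Real.sqrt T : ℂ) ≠ 0 := mod_cast (Real.sqrt_pos.mpr hT).ne'
  simp only [zak, rectPulse_add_int_mul hT, ite_mul, zero_mul, tsum_ite_eq]
  rw [← mul_assoc, mul_one_div_cancel hs, one_mul]
  congr 1
  push_cast
  ring

end RectPulse

theorem zak_receiver_io_relation_general {ι : Type*} (M N : ℕ)
    (T : ℝ) (hT : 0 < T) (Δf : ℝ) (hΔf : Δf = 1 / T)
    (g : ℝ → ℂ) (hg : ∀ t : ℝ, g t = if 0 ≤ t ∧ t < T then (1 / Real.sqrt T : ℂ) else 0)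
    (x : ℕ → ℕ → ℂ)
    (X : ℕ → ℕ → ℂ)
    (hX : ∀ n m : ℕ, X n m = (1 / (M * N) : ℂ) * ∑ k ∈ range N, ∑ l ∈ range M,
      x k l * Complex.exp (-2 * π * I * ((m * l : ℝ) / M - (n * k : ℝ) / N)))
    (xsig : ℝ → ℂ)
    (hx : ∀ t : ℝ, xsig t = ∑ m ∈ range M, ∑ n ∈ range N,
      X n m * g (t - n * T) * Complex.exp (2 * π * I * ((m : ℝ) * Δf * (t - n * T))))
    (s : Finset ι) (h : ι → ℂ) (τd νd : ι → ℝ)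
    (y : ℝ → ℂ)
    (hy : ∀ t : ℝ, y t = ∑ i ∈ s,
      h i * xsig (t - τd i) * Complex.exp (2 * π * I * (νd i * (t - τd i))))
    (k' l' : ℝ) :
    zak T y (l' * T / M) (k' * Δf / N) =
      ∑ k ∈ range N, ∑ l ∈ range M, x k l *
        ∑ i ∈ s,
          (h i * Complex.exp (2 * π * I * ((νd i / Δf) * (l' / M - τd i / T))) *
            Complex.exp (2 * π * I * ((k' / N - νd i / Δf) * (⌊l' / M - τd i / T⌋ : ℤ)))) *
          w1 N T ((k' - k) * Δf / N - νd i) *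
          w2 M T ((l' - l) * T / M - τd i) := by
  have hT' : (T : ℂ) ≠ 0 := mod_cast hT.ne'
  obtain rfl : g = rectPulse T := by
    ext t; simp only [hg, rectPulse, Set.indicator_apply, Set.mem_Ico]
  obtain rfl : X = isfft M N x := funext₂ hX
  subst hΔf
  obtain rfl : xsig = otfsSignal M N T (rectPulse T) x :=
    funext fun t => (hx t).trans (otfsSignal_apply ..).symm
  obtain rfl : y = tfSuperposition s h τd νd (otfsSignal M N T (rectPulse T) x) := by
    ext t; simp only [hy, tfSuperposition, tfShift, mul_assoc]
  rw [zak_tfSuperposition_otfsSignal hT.ne' (zakSummable_rectPulse hT)]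
  refine sum_congr rfl fun k _ => sum_congr rfl fun l _ => ?_
  refine congrArg (x k l * ·) (sum_congr rfl fun i _ => ?_)
  have hfloor : (l' * T / M - τd i) / T = l' / M - τd i / T := by field_simp
  have hcarrier : (νd i : ℂ) * ((l' * T / M : ℝ) - τd i) =
      νd i / (1 / T : ℝ) * (l' / M - τd i / T) := by push_cast; field_simp
  have hdoppler : ((k' * (1 / T) / N - νd i : ℝ) : ℂ) * T = k' / N - νd i / (1 / T : ℝ) := by
    push_cast; field_simp
  rw [zak_rectPulse hT, hfloor, hcarrier, hdoppler,
    show k' * (1 / T) / N - νd i - k / (N * T) = (k' - k) * (1 / T) / N - νd i by ring,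
    show l' * T / M - τd i - l * T / M = (l' - l) * T / M - τd i by ring]

/-- The sampled Zak transform of the noise-free multipath received OTFS signal:
`Z_y(l'T/M, k'Δf/N) = Σ_{k,l} x[k,l]·h̃[k',l',k,l]`. -/
theorem zak_receiver_io_relation (M N : ℕ) (hM : 0 < M) (hN : 0 < N)
    (T : ℝ) (hT : 0 < T) (Δf : ℝ) (hΔf : Δf = 1 / T)
    (g : ℝ → ℂ) (hg : ∀ t : ℝ, g t = if 0 ≤ t ∧ t < T then (1 / Real.sqrt T : ℂ) else 0)
    (x : ℕ → ℕ → ℂ)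
    (X : ℕ → ℕ → ℂ)
    (hX : ∀ n m : ℕ, X n m = (1 / (M * N) : ℂ) * ∑ k ∈ range N, ∑ l ∈ range M,
      x k l * Complex.exp (-2 * π * I * ((m * l : ℝ) / M - (n * k : ℝ) / N)))
    (xsig : ℝ → ℂ)
    (hx : ∀ t : ℝ, xsig t = ∑ m ∈ range M, ∑ n ∈ range N,
      X n m * g (t - n * T) * Complex.exp (2 * π * I * ((m : ℝ) * Δf * (t - n * T))))
    (L : ℕ) (hL : 1 ≤ L) (h : ℕ → ℂ) (τd νd : ℕ → ℝ)
    (hτ : ∀ i < L, 0 < τd i ∧ τd i < T)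
    (y : ℝ → ℂ)
    (hy : ∀ t : ℝ, y t = ∑ i ∈ range L,
      h i * xsig (t - τd i) * Complex.exp (2 * π * I * (νd i * (t - τd i)))) :
    ∀ k' < N, ∀ l' < M,
      zak T y ((l' : ℝ) * T / M) ((k' : ℝ) * Δf / N) =
        ∑ k ∈ range N, ∑ l ∈ range M, x k l *
          ∑ i ∈ range L,
            (h i * Complex.exp (2 * π * I * ((νd i / Δf) * ((l' : ℝ) / M - τd i / T))) *
              Complex.exp (2 * π * I * (((k' : ℝ) / N - νd i / Δf) *
                (⌊(l' : ℝ) / M - τd i / T⌋ : ℤ)))) *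
            w1 N T (((k' : ℝ) - (k : ℝ)) * Δf / N - νd i) *
            w2 M T (((l' : ℝ) - (l : ℝ)) * T / M - τd i) := by
  intro k' _ l' _
  exact zak_receiver_io_relation_general M N T hT Δf hΔf g hg x X hX xsig hx (range L) h τd νd y hy
    k' l'
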